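/- Let f, h : ℝ^D → ℝ^D (Euclidean space), let x ∈ ℝ^D, and suppose: h is Lipschitz with constant L_h and has Fréchet derivative H' at x with det H' ≠ 0; f is a bijection with Fréchet derivative F' at x; the inverse function f⁻¹ is Lipschitz with constant L_g and has a Fréchet derivative G' at f(x). Then log( |det H'| / |det F'| ) ≤ D · ( L_h + L_g − 2 ), where det denotes the determinant of a continuous linear map on ℝ^D. -/

import Mathlib

/-!
Comparing the Haar measures of the unit ball and of its image under a linear map `A` of an
`n`-dimensional space shows `|det A| ≤ ‖A‖ ^ n`, and `log t ≤ t - 1` turns this into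
`log |det A| ≤ n * (‖A‖ - 1)`. The theorem is this bound for the two factors of
`|det H'| / |det F'| = |det H'| * |det F'⁻¹|`: a Lipschitz bound on `h` is inherited by `H'`, and
a Lipschitz bound on `f⁻¹` is an expansion bound `‖y - x‖ ≤ Lg * ‖f y - f x‖` on `f`, which `F'`
inherits, so that `F'` is invertible and `‖F'⁻¹‖ ≤ Lg`.
-/

open Bornology Filter MeasureTheory Metric Module
open scoped NNReal Topology

section Expanding

variable {𝕜 E F : Type*} [NontriviallyNormedField 𝕜] [NormedAddCommGroup E] [NormedSpace 𝕜 E]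
  [NormedAddCommGroup F] [NormedSpace 𝕜 F]

theorem antilipschitzWith_of_hasFDerivAt_of_eventually_le {f : E → F} {f' : E →L[𝕜] F} {x : E}
    {K : ℝ≥0} (hf : HasFDerivAt f f' x) (hK : ∀ᶠ y in 𝓝 x, ‖y - x‖ ≤ K * ‖f y - f x‖) :
    AntilipschitzWith K f' := by
  refine f'.antilipschitz_of_bound fun v => ?_
  have quotient_tendsto : Tendsto (fun c : 𝕜 => c • (f (x + c⁻¹ • v) - f x)) (cobounded 𝕜)
      (𝓝 (f' v)) := hf.lim v tendsto_norm_cobounded_atTop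
  have point_tendsto : Tendsto (fun c : 𝕜 => x + c⁻¹ • v) (cobounded 𝕜) (𝓝 x) := by
    have inv_tendsto : Tendsto (fun c : 𝕜 => c⁻¹) (cobounded 𝕜) (𝓝 0) :=
      tendsto_inv₀_cobounded
    simpa only [zero_smul, add_zero] using (inv_tendsto.smul_const v).const_add x
  refine ge_of_tendsto (quotient_tendsto.norm.const_mul (K : ℝ)) ?_
  filter_upwards [point_tendsto.eventually hK, eventually_ne_cobounded (0 : 𝕜)] with c hc hc0
  calc ‖v‖ = ‖c‖ * ‖x + c⁻¹ • v - x‖ := by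
        rw [add_sub_cancel_left, ← norm_smul, smul_inv_smul₀ hc0]
    _ ≤ ‖c‖ * (K * ‖f (x + c⁻¹ • v) - f x‖) := by gcongr
    _ = K * ‖c • (f (x + c⁻¹ • v) - f x)‖ := by rw [norm_smul, mul_left_comm]

theorem exists_continuousLinearEquiv_of_antilipschitzWith [CompleteSpace 𝕜]
    [FiniteDimensional 𝕜 E] {A : E →L[𝕜] E} {K : ℝ≥0} (hA : AntilipschitzWith K A) :
    ∃ e : E ≃L[𝕜] E, (e : E →L[𝕜] E) = A ∧ ‖(e.symm : E →L[𝕜] E)‖ ≤ K := by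
  let e := (LinearEquiv.ofInjectiveEndo (A : E →ₗ[𝕜] E) hA.injective).toContinuousLinearEquiv
  have symm_lipschitz : LipschitzWith K e.symm := hA.to_rightInverse e.apply_symm_apply
  exact ⟨e, rfl, ContinuousLinearMap.opNorm_le_of_lipschitz symm_lipschitz⟩

end Expanding

section Determinant

variable {E : Type*} [NormedAddCommGroup E] [NormedSpace ℝ E] [FiniteDimensional ℝ E]

theorem abs_det_le_opNorm_pow_finrank (A : E →L[ℝ] E) : |A.det| ≤ ‖A‖ ^ finrank ℝ E := by
  borelize E
  let μ : Measure E := Measure.addHaar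
  have image_subset : A '' closedBall 0 1 ⊆ closedBall 0 ‖A‖ := by
    rintro _ ⟨v, hv, rfl⟩
    exact mem_closedBall_zero_iff.2 (A.unit_le_opNorm v (mem_closedBall_zero_iff.1 hv))
  have measure_le : ENNReal.ofReal |A.det| * μ (closedBall 0 1) ≤
      ENNReal.ofReal (‖A‖ ^ finrank ℝ E) * μ (closedBall 0 1) := by
    calc ENNReal.ofReal |A.det| * μ (closedBall 0 1) = μ (A '' closedBall 0 1) :=
          (Measure.addHaar_image_continuousLinearMap μ A _).symm
      _ ≤ μ (closedBall 0 ‖A‖) := measure_mono image_subset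
      _ = ENNReal.ofReal (‖A‖ ^ finrank ℝ E) * μ (closedBall 0 1) :=
          Measure.addHaar_closedBall' μ 0 (norm_nonneg A)
  have ofReal_le := (ENNReal.mul_le_mul_iff_left
    (measure_closedBall_pos μ 0 one_pos).ne' measure_closedBall_lt_top.ne).1 measure_le
  exact (ENNReal.ofReal_le_ofReal_iff (by positivity)).1 ofReal_le

theorem log_abs_det_le_finrank_mul_opNorm_sub_one {A : E →L[ℝ] E} (hA : A.det ≠ 0) :
    Real.log |A.det| ≤ finrank ℝ E * (‖A‖ - 1) := by
  rw [Real.log_le_iff_le_exp (abs_pos.2 hA), Real.exp_nat_mul]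
  calc |A.det| ≤ ‖A‖ ^ finrank ℝ E := abs_det_le_opNorm_pow_finrank A
    _ ≤ Real.exp (‖A‖ - 1) ^ finrank ℝ E := by
        gcongr
        linarith [Real.add_one_le_exp (‖A‖ - 1)]

theorem log_jacobian_ratio_le_lipschitz_general {f h : E → E} {x : E} {Lh Lg : ℝ≥0}
    {H' F' : E →L[ℝ] E} (hH : HasFDerivAt h H' x) (hHdet : H'.det ≠ 0)
    (hhLip : ∀ᶠ y in 𝓝 x, ‖h y - h x‖ ≤ Lh * ‖y - x‖)
    (hF : HasFDerivAt f F' x) (hfExp : ∀ᶠ y in 𝓝 x, ‖y - x‖ ≤ Lg * ‖f y - f x‖) :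
    Real.log (|H'.det| / |F'.det|) ≤ finrank ℝ E * ((Lh : ℝ) + (Lg : ℝ) - 2) := by
  have norm_H'_le : ‖H'‖ ≤ Lh := hH.le_of_lip' Lh.coe_nonneg hhLip
  obtain ⟨e, rfl, norm_symm_le⟩ := exists_continuousLinearEquiv_of_antilipschitzWith
    (antilipschitzWith_of_hasFDerivAt_of_eventually_le hF hfExp)
  have det_symm_ne_zero : (e.symm : E →L[ℝ] E).det ≠ 0 :=
    e.symm.toLinearEquiv.isUnit_det'.ne_zero
  calc Real.log (|H'.det| / |(e : E →L[ℝ] E).det|)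
      = Real.log |H'.det| + Real.log |(e.symm : E →L[ℝ] E).det| := by
        rw [← Real.log_mul (abs_ne_zero.2 hHdet) (abs_ne_zero.2 det_symm_ne_zero),
          e.det_coe_symm, abs_inv, div_eq_mul_inv]
    _ ≤ finrank ℝ E * (‖H'‖ - 1) + finrank ℝ E * (‖(e.symm : E →L[ℝ] E)‖ - 1) :=
        add_le_add (log_abs_det_le_finrank_mul_opNorm_sub_one hHdet)
          (log_abs_det_le_finrank_mul_opNorm_sub_one det_symm_ne_zero)
    _ ≤ finrank ℝ E * (Lh - 1) + finrank ℝ E * (Lg - 1) := by gcongr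
    _ = finrank ℝ E * ((Lh : ℝ) + (Lg : ℝ) - 2) := by ring

end Determinant

/-- **Pointwise Jacobian bound (Lemma on `log(|J_h|/|J_f|)`).**
Let `f, h : ℝ^D → ℝ^D`, `x ∈ ℝ^D`, with `h` Lipschitz with constant `L_h` and
Fréchet differentiable at `x` with derivative `H'` satisfying `det H' ≠ 0`;
`f` a bijection differentiable at `x` with derivative `F'`; and the inverse
`f⁻¹` Lipschitz with constant `L_g` and differentiable at `f x` with
derivative `G'`.  Then `log(|det H'| / |det F'|) ≤ D·(L_h + L_g − 2)`. -/
theorem log_jacobian_ratio_le_lipschitz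
    {D : ℕ} (f h : EuclideanSpace ℝ (Fin D) → EuclideanSpace ℝ (Fin D))
    (x : EuclideanSpace ℝ (Fin D))
    (Lh Lg : NNReal)
    (hhLip : LipschitzWith Lh h)
    (H' : EuclideanSpace ℝ (Fin D) →L[ℝ] EuclideanSpace ℝ (Fin D))
    (hH : HasFDerivAt h H' x) (hHdet : H'.det ≠ 0)
    (hf : Function.Bijective f)
    (F' : EuclideanSpace ℝ (Fin D) →L[ℝ] EuclideanSpace ℝ (Fin D))
    (hF : HasFDerivAt f F' x)
    (hginvLip : LipschitzWith Lg (Function.invFun f))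
    (G' : EuclideanSpace ℝ (Fin D) →L[ℝ] EuclideanSpace ℝ (Fin D))
    (hG : HasFDerivAt (Function.invFun f) G' (f x)) :
    Real.log (|H'.det| / |F'.det|) ≤ D * ((Lh : ℝ) + (Lg : ℝ) - 2) := by
  have hfExp : AntilipschitzWith Lg f :=
    hginvLip.to_rightInverse (Function.leftInverse_invFun hf.1)
  simpa only [finrank_euclideanSpace_fin] using log_jacobian_ratio_le_lipschitz_general hH hHdet
    (.of_forall fun y => hhLip.norm_sub_le y x) hF
    (.of_forall fun y => by simpa only [dist_eq_norm] using hfExp.le_mul_dist y x)
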